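/- arXiv:2305.13027 — 2 statements merged into one kernel-verified Lean document; each statement's English description precedes it below -/
import Mathlib

section
/- Let x : Fin 11 → ℝ^10 be a regular 11-simplex, C1 = {x 0, …, x 10}, let C2 be a clique of order 10 in the graph on Y1, and let Z1 be a 45-element subset of Z all of whose pairwise inner products of distinct elements lie in {α1, α2, α3}. Then the 66-element set X = C1 ∪ C2 ∪ Z1 is a W-configuration: all pairwise inner products of distinct vectors of X lie in {α1, α2, α3}; every u ∈ X has exactly 30 vectors v ∈ X with ⟨u,v⟩ = α1, exactly 20 with ⟨u,v⟩ = α2, and exactly 15 with ⟨u,v⟩ = α3; and for all distinct u, v ∈ X with ⟨u,v⟩ = α_k and all i, j ∈ {1,2,3}, the number of w ∈ X with ⟨u,w⟩ = α_i and ⟨w,v⟩ = α_j equals p^k_{ij}, where (p^1_{ij}) = [[15,10,4],[10,4,6],[4,6,5]], (p^2_{ij}) = [[15,6,9],[6,10,3],[9,3,3]], (p^3_{ij}) = [[8,12,10],[12,4,4],[10,4,0]] (rows indexed by i, columns by j). -/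
open RealInnerProductSpace

noncomputable section

/-- The three admissible inner product values (angles). -/
def α1 : ℝ := 4/15
def α2 : ℝ := -1/10
def α3 : ℝ := -7/15

/-- A regular 11-simplex in ℝ^10: eleven unit vectors with pairwise inner
products equal to -1/10. -/
def IsRegularSimplex (x : Fin 11 → EuclideanSpace ℝ (Fin 10)) : Prop :=
  (∀ i, ‖x i‖ = 1) ∧ ∀ i j : Fin 11, i ≠ j → ⟪x i, x j⟫ = -1/10

/-- The set `Y1`: unit vectors `y` with `⟪x 0, y⟫ = α2` such that among the
indices `i ≠ 0`, exactly six satisfy `⟪x i, y⟫ = α1`, exactly one satisfies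
`⟪x i, y⟫ = α2`, and exactly three satisfy `⟪x i, y⟫ = α3`. -/
def Y1set (x : Fin 11 → EuclideanSpace ℝ (Fin 10)) : Set (EuclideanSpace ℝ (Fin 10)) :=
  {y | ‖y‖ = 1 ∧ ⟪x 0, y⟫ = α2 ∧
    {i : Fin 11 | i ≠ 0 ∧ ⟪x i, y⟫ = α1}.ncard = 6 ∧
    {i : Fin 11 | i ≠ 0 ∧ ⟪x i, y⟫ = α2}.ncard = 1 ∧
    {i : Fin 11 | i ≠ 0 ∧ ⟪x i, y⟫ = α3}.ncard = 3}

/-- A clique of order 10 in the graph on `Y1` in which two distinct vectors are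
adjacent iff their inner product equals `α2`. -/
def IsClique10 (x : Fin 11 → EuclideanSpace ℝ (Fin 10))
    (D : Set (EuclideanSpace ℝ (Fin 10))) : Prop :=
  D ⊆ Y1set x ∧ D.ncard = 10 ∧
    ∀ y ∈ D, ∀ y' ∈ D, y ≠ y' → ⟪y, y'⟫ = α2

/-- The set `Y`: unit vectors `u ∉ C2` whose inner products with
`x 0, …, x 10` take the value `α1` exactly six times, `α2` exactly twice, and
`α3` exactly three times. -/
def Yset (x : Fin 11 → EuclideanSpace ℝ (Fin 10))
    (C2 : Set (EuclideanSpace ℝ (Fin 10))) : Set (EuclideanSpace ℝ (Fin 10)) :=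
  {u | ‖u‖ = 1 ∧ u ∉ C2 ∧
    {i : Fin 11 | ⟪x i, u⟫ = α1}.ncard = 6 ∧
    {i : Fin 11 | ⟪x i, u⟫ = α2}.ncard = 2 ∧
    {i : Fin 11 | ⟪x i, u⟫ = α3}.ncard = 3}

/-- The set `Z`: vectors of `Y` whose inner products with all vectors of `C2`
lie in `{α1, α2, α3}`. -/
def Zset (x : Fin 11 → EuclideanSpace ℝ (Fin 10))
    (C2 : Set (EuclideanSpace ℝ (Fin 10))) : Set (EuclideanSpace ℝ (Fin 10)) :=
  {u ∈ Yset x C2 | ∀ w ∈ C2, ⟪u, w⟫ ∈ ({α1, α2, α3} : Set ℝ)}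

/-- The three admissible angles, indexed. -/
def wAngle : Fin 3 → ℝ := ![α1, α2, α3]

/-- The intersection numbers `p^k_{ij}` of the association scheme `W` of the
Witt 4-(11,5,1) design (index `k` first, then row `i`, column `j`). -/
def wP : Fin 3 → Fin 3 → Fin 3 → ℕ :=
  ![![![15,10,4], ![10,4,6], ![4,6,5]],
    ![![15,6,9], ![6,10,3], ![9,3,3]],
    ![![8,12,10], ![12,4,4], ![10,4,0]]]

/-- A `W`-configuration: 66 unit vectors in ℝ^10 whose pairwise inner products
lie in `{α1, α2, α3}`, realizing the valencies 30, 20, 15 and the intersection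
numbers `p^k_{ij}` of the association scheme `W` of the Witt 4-(11,5,1)
design. -/
def IsWConfig (X : Set (EuclideanSpace ℝ (Fin 10))) : Prop :=
  X.ncard = 66 ∧ (∀ u ∈ X, ‖u‖ = 1) ∧
  (∀ u ∈ X, ∀ v ∈ X, u ≠ v → ⟪u, v⟫ ∈ ({α1, α2, α3} : Set ℝ)) ∧
  (∀ u ∈ X, {v | v ∈ X ∧ ⟪u, v⟫ = α1}.ncard = 30 ∧
            {v | v ∈ X ∧ ⟪u, v⟫ = α2}.ncard = 20 ∧
            {v | v ∈ X ∧ ⟪u, v⟫ = α3}.ncard = 15) ∧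
  (∀ u ∈ X, ∀ v ∈ X, u ≠ v → ∀ k i j : Fin 3, ⟪u, v⟫ = wAngle k →
    {w | w ∈ X ∧ ⟪u, w⟫ = wAngle i ∧ ⟪w, v⟫ = wAngle j}.ncard = wP k i j)

section Simplex

open scoped Classical

variable {E : Type*} [NormedAddCommGroup E] [InnerProductSpace ℝ E]

/-- A finite set of unit vectors is a regular simplex on eleven vertices if its distinct
elements have inner product `-1/10`. -/
structure IsSimplexFinset (s : Finset E) : Prop where
  card_eq : s.card = 11
  norm_eq : ∀ u ∈ s, ‖u‖ = 1
  inner_eq : ∀ u ∈ s, ∀ v ∈ s, u ≠ v → ⟪u, v⟫ = -1/10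

theorem inner_self_of_norm_one {u : E} (hu : ‖u‖ = 1) : ⟪u, u⟫ = 1 := by
  rw [real_inner_self_eq_norm_sq, hu, one_pow]

/-- Unit vectors with pairwise inner products at most `-1/10` number at most eleven, and eleven
of them form a regular simplex. -/
theorem card_le_of_inner_le (s : Finset E) (hn : ∀ u ∈ s, ‖u‖ = 1)
    (hi : ∀ u ∈ s, ∀ v ∈ s, u ≠ v → ⟪u, v⟫ ≤ -1/10) :
    s.card ≤ 11 ∧ (s.card = 11 → IsSimplexFinset s) := by
  have key : 0 ≤ ∑ u ∈ s, ∑ v ∈ s, ⟪u, v⟫ := by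
    have h : ⟪∑ u ∈ s, u, ∑ v ∈ s, v⟫ = ∑ u ∈ s, ∑ v ∈ s, ⟪u, v⟫ := by
      simp_rw [sum_inner, inner_sum]
    rw [← h]
    exact real_inner_self_nonneg
  have hd (u : E) (hu : u ∈ s) :
      ∑ v ∈ s, ((if u = v then (11 / 10 : ℝ) else 0) - 1/10) = 11/10 - s.card / 10 := by
    rw [Finset.sum_sub_distrib, Finset.sum_ite_eq, if_pos hu]
    simp
    ring
  have hle : ∀ u ∈ s, ∀ v ∈ s, ⟪u, v⟫ ≤ (if u = v then (11 / 10 : ℝ) else 0) - 1/10 := by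
    intro u hu v hv
    split_ifs with h
    · subst h
      rw [inner_self_of_norm_one (hn u hu)]
      norm_num
    · have := hi u hu v hv h
      linarith
  have hsum : ∑ u ∈ s, ∑ v ∈ s, ((if u = v then (11 / 10 : ℝ) else 0) - 1/10)
      = s.card * (11/10 - s.card / 10) := by
    rw [Finset.sum_congr rfl hd, Finset.sum_const, nsmul_eq_mul]
  constructor
  · by_contra! h
    have h' : (12 : ℝ) ≤ s.card := by exact_mod_cast h
    have h2 := Finset.sum_le_sum fun u hu => Finset.sum_le_sum (hle u hu)
    rw [hsum] at h2
    nlinarith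
  · intro hc
    refine ⟨hc, hn, fun u hu v hv huv => le_antisymm (hi u hu v hv huv) ?_⟩
    by_contra! hlt
    have h2 : ∑ u ∈ s, ∑ v ∈ s, ⟪u, v⟫ <
        ∑ u ∈ s, ∑ v ∈ s, ((if u = v then (11 / 10 : ℝ) else 0) - 1/10) := by
      refine Finset.sum_lt_sum (fun u hu => Finset.sum_le_sum (hle u hu)) ⟨u, hu, ?_⟩
      refine Finset.sum_lt_sum (hle u hu) ⟨v, hv, ?_⟩
      rw [if_neg huv]
      linarith
    rw [hsum, hc] at h2
    norm_num at h2
    linarith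

namespace IsSimplexFinset

variable {s : Finset E}

theorem inner_eq_ite (hs : IsSimplexFinset s) {u v : E} (hu : u ∈ s) (hv : v ∈ s) :
    ⟪u, v⟫ = (if u = v then (11 / 10 : ℝ) else 0) - 1/10 := by
  split_ifs with h
  · subst h
    rw [inner_self_of_norm_one (hs.norm_eq u hu)]
    norm_num
  · rw [hs.inner_eq u hu v hv h]
    norm_num

theorem sum_eq_zero (hs : IsSimplexFinset s) : ∑ u ∈ s, u = 0 := by
  rw [← inner_self_eq_zero (𝕜 := ℝ)]
  simp_rw [sum_inner, inner_sum]
  have h (u : E) (hu : u ∈ s) : ∑ v ∈ s, ⟪u, v⟫ = 0 := by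
    rw [Finset.sum_congr rfl fun v hv => hs.inner_eq_ite hu hv, Finset.sum_sub_distrib,
      Finset.sum_ite_eq, if_pos hu]
    simp [hs.card_eq]
    norm_num
  exact Finset.sum_eq_zero h

theorem sum_inner_eq_zero (hs : IsSimplexFinset s) (u : E) : ∑ w ∈ s, ⟪u, w⟫ = 0 := by
  rw [← inner_sum, hs.sum_eq_zero, inner_zero_right]

theorem span_eq_top (hs : IsSimplexFinset s) (hE : Module.finrank ℝ E = 10) :
    Submodule.span ℝ (s : Set E) = ⊤ := by
  obtain ⟨z, hz⟩ : s.Nonempty := Finset.card_pos.1 (by rw [hs.card_eq]; norm_num)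
  have hli : LinearIndependent ℝ (fun w : s.erase z => (w : E)) := by
    refine (linearIndepOn_finset_iff (R := ℝ) (v := id) (s := s.erase z)).2 fun f hf => ?_
    simp only [id] at hf
    have hy (y : E) (hy : y ∈ s) :
        (if y ∈ s.erase z then f y * (11/10) else 0) - (∑ w ∈ s.erase z, f w) / 10 = 0 := by
      have h := congrArg (fun a => ⟪a, y⟫) hf
      simp only [sum_inner, real_inner_smul_left, inner_zero_left] at h
      rw [Finset.sum_congr rfl fun w hw => by
        rw [hs.inner_eq_ite (Finset.mem_of_mem_erase hw) hy, mul_sub, mul_ite, mul_zero],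
        Finset.sum_sub_distrib, Finset.sum_ite_eq', ← Finset.sum_mul] at h
      linarith
    have h0 := hy z hz
    rw [if_neg (Finset.notMem_erase z s)] at h0
    intro y hys
    have h1 := hy y (Finset.mem_of_mem_erase hys)
    rw [if_pos hys] at h1
    linarith
  have : FiniteDimensional ℝ E := Module.finite_of_finrank_pos (by rw [hE]; norm_num)
  have h := hli.span_eq_top_of_card_eq_finrank' (by
    rw [Fintype.card_coe, Finset.card_erase_of_mem hz, hs.card_eq, hE])
  refine top_unique (h ▸ Submodule.span_mono ?_)
  rintro _ ⟨w, rfl⟩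
  exact Finset.mem_of_mem_erase w.2

/-- A regular simplex is a tight frame. -/
theorem sum_inner_mul_inner (hs : IsSimplexFinset s) (hE : Module.finrank ℝ E = 10) (u v : E) :
    ∑ w ∈ s, ⟪u, w⟫ * ⟪w, v⟫ = 11/10 * ⟪u, v⟫ := by
  have hu : u ∈ Submodule.span ℝ (s : Set E) := by
    rw [hs.span_eq_top hE]
    trivial
  induction hu using Submodule.span_induction with
  | mem u hu =>
    have hu : u ∈ s := hu
    have h0 := hs.sum_inner_eq_zero v
    simp_rw [real_inner_comm _ v] at h0
    rw [Finset.sum_congr rfl fun w hw => by rw [hs.inner_eq_ite hu hw, sub_mul, ite_mul, zero_mul],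
      Finset.sum_sub_distrib, Finset.sum_ite_eq, if_pos hu, ← Finset.mul_sum, h0]
    ring
  | zero => simp
  | add a b _ _ ha hb => simp only [inner_add_left, add_mul, Finset.sum_add_distrib, ha, hb, mul_add]
  | smul c a _ ha =>
    simp only [real_inner_smul_left, mul_assoc, ← Finset.mul_sum, ha]
    ring

end IsSimplexFinset

theorem wAngle_injective : Function.Injective wAngle := by
  intro i j h
  fin_cases i <;> fin_cases j <;> first | rfl | (norm_num [wAngle, α1, α2, α3] at h)

theorem wAngle_ne_one (k : Fin 3) : wAngle k ≠ 1 := by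
  fin_cases k <;> norm_num [wAngle, α1, α2, α3]

theorem exists_eq_wAngle_iff {t : ℝ} : (∃ k, t = wAngle k) ↔ t ∈ ({α1, α2, α3} : Set ℝ) := by
  simp [Fin.exists_fin_succ, wAngle]

theorem sum_eq_sum_sum_filter_inner {s : Finset E} {u : E} (h : ∀ w ∈ s, ∃ k, ⟪u, w⟫ = wAngle k)
    (g : E → ℝ) : ∑ w ∈ s, g w = ∑ k, ∑ w ∈ s with ⟪u, w⟫ = wAngle k, g w := by
  simp_rw [Finset.sum_filter]
  rw [Finset.sum_comm]
  refine Finset.sum_congr rfl fun w hw => ?_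
  obtain ⟨k, hk⟩ := h w hw
  simp [hk, wAngle_injective.eq_iff]

theorem sum_inner_eq_sum_card {s : Finset E} {u : E} (h : ∀ w ∈ s, ∃ k, ⟪u, w⟫ = wAngle k)
    (f : ℝ → ℝ) :
    ∑ w ∈ s, f ⟪u, w⟫ = ∑ k, (s.filter fun w => ⟪u, w⟫ = wAngle k).card * f (wAngle k) := by
  rw [sum_eq_sum_sum_filter_inner h]
  refine Finset.sum_congr rfl fun k _ => ?_
  rw [Finset.sum_congr rfl fun w hw => by rw [(Finset.mem_filter.1 hw).2], Finset.sum_const,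
    nsmul_eq_mul]

/-- The distribution of the inner products of a regular simplex with a unit vector at admissible
angles. -/
theorem IsSimplexFinset.card_filter_inner {s : Finset E} (hs : IsSimplexFinset s)
    (hE : Module.finrank ℝ E = 10) {u : E} (hu : ‖u‖ = 1)
    (h : ∀ w ∈ s, ∃ k, ⟪u, w⟫ = wAngle k) (i : Fin 3) :
    (((s.filter fun w => ⟪u, w⟫ = wAngle i).card : ℕ) : ℝ) = ![6, 2, 3] i := by
  have h0 := sum_inner_eq_sum_card h fun _ => 1
  have h1 := sum_inner_eq_sum_card h fun t => t
  have h2 := sum_inner_eq_sum_card h fun t => t * t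
  have h3 := hs.sum_inner_mul_inner hE u u
  simp_rw [fun w => real_inner_comm u w] at h3
  rw [h2, inner_self_of_norm_one hu] at h3
  rw [hs.sum_inner_eq_zero] at h1
  rw [Finset.sum_const, nsmul_eq_mul, hs.card_eq] at h0
  simp only [Fin.sum_univ_three, wAngle, α1, α2, α3, Matrix.cons_val] at h0 h1 h3 ⊢
  fin_cases i <;> simp <;> norm_num at h0 h1 h3 ⊢ <;> linarith

theorem IsSimplexFinset.card_filter_inner_of_mem {s : Finset E} (hs : IsSimplexFinset s)
    {u : E} (hu : u ∈ s) (i : Fin 3) :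
    (((s.filter fun w => ⟪u, w⟫ = wAngle i).card : ℕ) : ℝ) = ![0, 10, 0] i := by
  have h (w : E) (hw : w ∈ s) : ⟪u, w⟫ = wAngle i ↔ w ∈ if i = 1 then s.erase u else ∅ := by
    by_cases huw : u = w
    · subst huw
      rw [inner_self_of_norm_one (hs.norm_eq u hu)]
      have := (wAngle_ne_one i).symm
      split_ifs <;> simp [this]
    · have : ⟪u, w⟫ = wAngle 1 := hs.inner_eq u hu w hw huw
      rw [this, wAngle_injective.eq_iff]
      split_ifs with hi
      · simp [hi, hw, Ne.symm huw]
      · simp [Ne.symm hi]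
  rw [Finset.filter_congr h, Finset.filter_mem_eq_inter]
  fin_cases i
  · simp
  · have h10 : (s ∩ s.erase u).card = 10 := by
      rw [Finset.inter_eq_right.2 (Finset.erase_subset u s), Finset.card_erase_of_mem hu,
        hs.card_eq]
    simp [h10]
  · simp

/-- A finite set of unit vectors at admissible angles which is covered twice by twelve regular
simplices, any two of which share at most one vertex. -/
structure IsSimplexCover {ι : Type*} [Fintype ι] (X : Finset E) (S : ι → Finset E) : Prop where
  card_index : Fintype.card ι = 12
  norm_eq : ∀ u ∈ X, ‖u‖ = 1
  angle : ∀ u ∈ X, ∀ v ∈ X, u ≠ v → ∃ k, ⟪u, v⟫ = wAngle k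
  simplex : ∀ a, IsSimplexFinset (S a)
  subset : ∀ a, S a ⊆ X
  card_mem : ∀ u ∈ X, (Finset.univ.filter fun a => u ∈ S a).card = 2
  eq_of_mem : ∀ a b u v, a ≠ b → u ∈ S a → u ∈ S b → v ∈ S a → v ∈ S b → u = v

namespace IsSimplexCover

variable {ι : Type*} [Fintype ι] {X : Finset E} {S : ι → Finset E}

theorem sum_sum (h : IsSimplexCover X S) (g : E → ℝ) :
    ∑ a, ∑ w ∈ S a, g w = 2 * ∑ w ∈ X, g w := by
  have h1 (a : ι) : ∑ w ∈ S a, g w = ∑ w ∈ X, if w ∈ S a then g w else 0 := by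
    rw [← Finset.sum_filter, Finset.filter_mem_eq_inter, Finset.inter_eq_right.2 (h.subset a)]
  simp_rw [h1]
  rw [Finset.sum_comm, Finset.mul_sum]
  refine Finset.sum_congr rfl fun w hw => ?_
  rw [← Finset.sum_filter, Finset.sum_const, h.card_mem w hw, nsmul_eq_mul]
  norm_num

theorem card_filter_simplex (h : IsSimplexCover X S) (hE : Module.finrank ℝ E = 10) {u : E}
    (hu : u ∈ X) (a : ι) (i : Fin 3) :
    ((((S a).filter fun w => ⟪u, w⟫ = wAngle i).card : ℕ) : ℝ) =
      if u ∈ S a then ![0, 10, 0] i else ![6, 2, 3] i := by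
  split_ifs with ha
  · exact (h.simplex a).card_filter_inner_of_mem ha i
  · exact (h.simplex a).card_filter_inner hE (h.norm_eq u hu)
      (fun w hw => h.angle u hu w (h.subset a hw) fun e => ha (e ▸ hw)) i

theorem card_eq (h : IsSimplexCover X S) : X.card = 66 := by
  have h1 := h.sum_sum fun _ => 1
  simp [(h.simplex _).card_eq, h.card_index] at h1
  have : (X.card : ℝ) = 66 := by linarith
  exact_mod_cast this

/-- The valencies. -/
theorem card_filter (h : IsSimplexCover X S) (hE : Module.finrank ℝ E = 10) {u : E}
    (hu : u ∈ X) (i : Fin 3) :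
    (((X.filter fun w => ⟪u, w⟫ = wAngle i).card : ℕ) : ℝ) = ![30, 20, 15] i := by
  have h1 := h.sum_sum fun w => if ⟪u, w⟫ = wAngle i then 1 else 0
  simp_rw [Finset.sum_boole, h.card_filter_simplex hE hu] at h1
  rw [Finset.sum_ite, Finset.sum_const, Finset.sum_const, h.card_mem u hu,
    ← Finset.compl_filter, Finset.card_compl, h.card_mem u hu, h.card_index] at h1
  fin_cases i <;> simp at h1 ⊢ <;> linarith

theorem sum_inner_mul_inner (h : IsSimplexCover X S) (hE : Module.finrank ℝ E = 10) (u v : E) :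
    ∑ w ∈ X, ⟪u, w⟫ * ⟪w, v⟫ = 66/10 * ⟪u, v⟫ := by
  have h1 := h.sum_sum fun w => ⟪u, w⟫ * ⟪w, v⟫
  simp_rw [(h.simplex _).sum_inner_mul_inner hE] at h1
  rw [Finset.sum_const, Finset.card_univ, h.card_index, nsmul_eq_mul] at h1
  norm_num at h1
  linarith

/-- The vectors at angle `α2` to `v` are the other vertices of the two simplices through `v`. -/
theorem exists_filter_eq (h : IsSimplexCover X S) (hE : Module.finrank ℝ E = 10) {v : E}
    (hv : v ∈ X) : ∃ c d, v ∈ S c ∧ v ∈ S d ∧ S c ∩ S d = {v} ∧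
      X.filter (fun w => ⟪v, w⟫ = wAngle 1) = (S c ∪ S d).erase v := by
  obtain ⟨c, d, hcd, he⟩ := Finset.card_eq_two.1 (h.card_mem v hv)
  have hc : v ∈ S c := by simpa using (he ▸ by simp : c ∈ Finset.univ.filter fun a => v ∈ S a)
  have hd : v ∈ S d := by simpa using (he ▸ by simp : d ∈ Finset.univ.filter fun a => v ∈ S a)
  have hi : S c ∩ S d = {v} := by
    ext w
    rw [Finset.mem_inter, Finset.mem_singleton]
    exact ⟨fun hw => h.eq_of_mem c d w v hcd hw.1 hw.2 hc hd, fun hw => hw ▸ ⟨hc, hd⟩⟩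
  refine ⟨c, d, hc, hd, hi, ?_⟩
  symm
  apply Finset.eq_of_subset_of_card_le
  · intro w hw
    rw [Finset.mem_erase, Finset.mem_union] at hw
    obtain ⟨hne, hw | hw⟩ := hw
    · exact Finset.mem_filter.2 ⟨h.subset c hw, (h.simplex c).inner_eq v hc w hw hne.symm⟩
    · exact Finset.mem_filter.2 ⟨h.subset d hw, (h.simplex d).inner_eq v hd w hw hne.symm⟩
  · have h1 : (((X.filter fun w => ⟪v, w⟫ = wAngle 1).card : ℕ) : ℝ) = 20 := h.card_filter hE hv 1
    have h2 : (X.filter fun w => ⟪v, w⟫ = wAngle 1).card = 20 := by exact_mod_cast h1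
    have h3 := Finset.card_union_add_card_inter (S c) (S d)
    rw [hi, Finset.card_singleton, (h.simplex c).card_eq, (h.simplex d).card_eq] at h3
    rw [h2, Finset.card_erase_of_mem (Finset.mem_union_left _ hc)]
    omega

theorem sum_mul_eq (h : IsSimplexCover X S) {u v : E} (hu : u ∈ X) (hv : v ∈ X) (huv : u ≠ v)
    (f g : ℝ → ℝ) :
    ∑ w ∈ X, f ⟪u, w⟫ * g ⟪w, v⟫ =
      ∑ i, ∑ j, (X.filter fun w => ⟪u, w⟫ = wAngle i ∧ ⟪w, v⟫ = wAngle j).card *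
        (f (wAngle i) * g (wAngle j)) + f 1 * g ⟪u, v⟫ + f ⟪u, v⟫ * g 1 := by
  have hu1 := inner_self_of_norm_one (h.norm_eq u hu)
  have hv1 := inner_self_of_norm_one (h.norm_eq v hv)
  have hvu : v ∈ X.erase u := Finset.mem_erase.2 ⟨huv.symm, hv⟩
  rw [← Finset.add_sum_erase _ _ hu, ← Finset.add_sum_erase _ _ hvu, hu1, hv1]
  have hs (w : E) (hw : w ∈ (X.erase u).erase v) : w ≠ v ∧ w ≠ u ∧ w ∈ X := by
    simpa using hw
  have key : ∑ w ∈ (X.erase u).erase v, f ⟪u, w⟫ * g ⟪w, v⟫ =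
      ∑ i, ∑ j, (X.filter fun w => ⟪u, w⟫ = wAngle i ∧ ⟪w, v⟫ = wAngle j).card *
        (f (wAngle i) * g (wAngle j)) := by
    rw [sum_eq_sum_sum_filter_inner (u := u)
      fun w hw => h.angle u hu w (hs w hw).2.2 (hs w hw).2.1.symm]
    refine Finset.sum_congr rfl fun i _ => ?_
    rw [sum_eq_sum_sum_filter_inner (u := v) fun w hw => by
      have hw := hs w (Finset.mem_filter.1 hw).1
      exact h.angle v hv w hw.2.2 hw.1.symm]
    refine Finset.sum_congr rfl fun j _ => ?_
    have he : (((X.erase u).erase v).filter fun w => ⟪u, w⟫ = wAngle i).filter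
        (fun w => ⟪v, w⟫ = wAngle j) =
        X.filter fun w => ⟪u, w⟫ = wAngle i ∧ ⟪w, v⟫ = wAngle j := by
      ext w
      simp only [Finset.mem_filter, Finset.mem_erase, real_inner_comm v w]
      constructor
      · tauto
      · rintro ⟨hw, hi, hj⟩
        refine ⟨⟨⟨?_, ?_, hw⟩, hi⟩, hj⟩
        · rintro rfl
          exact wAngle_ne_one j (hj ▸ hv1)
        · rintro rfl
          exact wAngle_ne_one i (hi ▸ hu1)
    rw [he, Finset.sum_congr rfl fun w hw => by
      rw [(Finset.mem_filter.1 hw).2.1, (Finset.mem_filter.1 hw).2.2], Finset.sum_const,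
      nsmul_eq_mul]
  rw [key]
  ring

theorem card_filter_one (h : IsSimplexCover X S) (hE : Module.finrank ℝ E = 10) {u v : E}
    (hu : u ∈ X) (hv : v ∈ X) (huv : u ≠ v) {k : Fin 3} (hk : ⟪u, v⟫ = wAngle k) (i : Fin 3) :
    (((X.filter fun w => ⟪u, w⟫ = wAngle i ∧ ⟪w, v⟫ = wAngle 1).card : ℕ) : ℝ) = wP k i 1 := by
  obtain ⟨c, d, hc, hd, hcd, hN⟩ := h.exists_filter_eq hE hv
  have hmem : u ∈ S c ∨ u ∈ S d ↔ k = 1 := by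
    have h1 : u ∈ X.filter (fun w => ⟪v, w⟫ = wAngle 1) ↔ k = 1 := by
      rw [Finset.mem_filter, real_inner_comm, hk, wAngle_injective.eq_iff]
      tauto
    rw [← h1, hN, Finset.mem_erase, Finset.mem_union]
    tauto
  have hnot : ¬(u ∈ S c ∧ u ∈ S d) := by
    rw [← Finset.mem_inter, hcd, Finset.mem_singleton]
    exact huv
  have hcount : (((X.filter fun w => ⟪u, w⟫ = wAngle i ∧ ⟪w, v⟫ = wAngle 1).card : ℕ) : ℝ) =
      (if u ∈ S c then ![0, 10, 0] i else ![6, 2, 3] i) +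
      (if u ∈ S d then ![0, 10, 0] i else ![6, 2, 3] i) - 2 * (if k = i then 1 else 0) := by
    have he : (X.filter fun w => ⟪u, w⟫ = wAngle i ∧ ⟪w, v⟫ = wAngle 1) =
        ((S c ∪ S d).erase v).filter fun w => ⟪u, w⟫ = wAngle i := by
      rw [← hN, Finset.filter_filter]
      refine Finset.filter_congr fun w _ => ?_
      rw [real_inner_comm v w, and_comm]
    have h1 := Finset.add_sum_erase (S c ∪ S d)
      (fun w => if ⟪u, w⟫ = wAngle i then (1 : ℝ) else 0) (Finset.mem_union_left _ hc)
    have h2 := Finset.sum_union_inter (s₁ := S c) (s₂ := S d)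
      (f := fun w => if ⟪u, w⟫ = wAngle i then (1 : ℝ) else 0)
    rw [hcd, Finset.sum_singleton] at h2
    simp only [Finset.sum_boole, hk, wAngle_injective.eq_iff, h.card_filter_simplex hE hu] at h1 h2
    rw [he]
    linarith
  rw [hcount]
  by_cases h1 : u ∈ S c <;> by_cases h2 : u ∈ S d <;> simp only [h1, h2] at hmem hnot ⊢ <;>
    fin_cases k <;> fin_cases i <;> simp [wP] at hmem hnot ⊢ <;> norm_num

/-- The linear equations which determine the intersection numbers. -/
theorem eq_wP_of_sums {N : Fin 3 → Fin 3 → ℝ} {k : Fin 3} (hone : ∀ i, N i 1 = wP k i 1)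
    (hone' : ∀ j, N 1 j = wP k j 1)
    (hrow : ∀ i, ∑ j, N i j + (if k = i then 1 else 0) = (![30, 20, 15] i : ℝ))
    (hcol : ∑ i, N i 0 + (if k = 0 then 1 else 0) = 30)
    (hframe : ∑ i, ∑ j, N i j * (wAngle i * wAngle j) + wAngle k + wAngle k = 66/10 * wAngle k)
    (i j : Fin 3) : N i j = wP k i j := by
  have h01 := hone 0
  have h11 := hone 1
  have h21 := hone 2
  have h10 := hone' 0
  have h12 := hone' 2
  have hr0 := hrow 0
  have hr2 := hrow 2
  clear hone hone' hrow
  simp only [Fin.sum_univ_three] at hr0 hr2 hcol hframe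
  fin_cases k <;> simp [wP, wAngle, α1, α2, α3] at h01 h11 h21 h10 h12 hr0 hr2 hcol hframe <;>
    fin_cases i <;> fin_cases j <;> simp [wP] <;> linarith

/-- The intersection numbers. -/
theorem card_filter_and (h : IsSimplexCover X S) (hE : Module.finrank ℝ E = 10) {u v : E}
    (hu : u ∈ X) (hv : v ∈ X) (huv : u ≠ v) {k : Fin 3} (hk : ⟪u, v⟫ = wAngle k) (i j : Fin 3) :
    (X.filter fun w => ⟪u, w⟫ = wAngle i ∧ ⟪w, v⟫ = wAngle j).card = wP k i j := by
  have hrow (i : Fin 3) := h.sum_mul_eq hu hv huv (fun t => if t = wAngle i then 1 else 0) fun _ => 1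
  have hcol := h.sum_mul_eq hu hv huv (fun _ => 1) fun t => if t = wAngle 0 then 1 else 0
  have hframe := h.sum_mul_eq hu hv huv (fun t => t) fun t => t
  rw [h.sum_inner_mul_inner hE] at hframe
  simp_rw [fun w => real_inner_comm v w] at hcol
  simp only [mul_one, one_mul, Finset.sum_boole, h.card_filter hE hu, h.card_filter hE hv,
    wAngle_injective.eq_iff, hk, (wAngle_ne_one _).symm] at hrow hcol hframe
  refine Nat.cast_injective (R := ℝ) (eq_wP_of_sums (k := k)
    (N := fun i j => (X.filter fun w => ⟪u, w⟫ = wAngle i ∧ ⟪w, v⟫ = wAngle j).card)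
    (h.card_filter_one hE hu hv huv hk) (fun j => ?_) (fun i => ?_) ?_ hframe.symm i j)
  · rw [← h.card_filter_one hE hv hu huv.symm ((real_inner_comm u v).trans hk)]
    simp_rw [real_inner_comm v, fun w => real_inner_comm w u, and_comm]
  · rw [hrow i]
    fin_cases i <;> simp
  · have h30 : (![30, 20, 15] 0 : ℝ) = 30 := rfl
    have hk' : ⟪v, u⟫ = wAngle k := (real_inner_comm u v).trans hk
    rw [← h30, hcol]
    simp [real_inner_comm v, hk', wAngle_injective.eq_iff]

end IsSimplexCover

section Label

variable {x : Fin 11 → EuclideanSpace ℝ (Fin 10)}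

theorem IsRegularSimplex.injective (hx : IsRegularSimplex x) : Function.Injective x := by
  intro i j h
  by_contra hij
  have h1 := hx.2 i j hij
  rw [h, inner_self_of_norm_one (hx.1 j)] at h1
  norm_num at h1

theorem IsRegularSimplex.isSimplexFinset (hx : IsRegularSimplex x) :
    IsSimplexFinset (Finset.univ.image x) where
  card_eq := by simp [Finset.card_image_of_injective _ hx.injective]
  norm_eq := by simpa using hx.1
  inner_eq := by
    simp only [Finset.mem_image, Finset.mem_univ, true_and]
    rintro _ ⟨i, rfl⟩ _ ⟨j, rfl⟩ h
    exact hx.2 i j fun e => h (congrArg x e)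

theorem IsRegularSimplex.sum_eq_zero (hx : IsRegularSimplex x) (u : EuclideanSpace ℝ (Fin 10)) :
    ∑ i, ⟪x i, u⟫ = 0 := by
  have h := hx.isSimplexFinset.sum_inner_eq_zero u
  rw [Finset.sum_image hx.injective.injOn] at h
  simpa only [real_inner_comm u] using h

theorem IsRegularSimplex.sum_mul (hx : IsRegularSimplex x) (u v : EuclideanSpace ℝ (Fin 10)) :
    ∑ i, ⟪x i, u⟫ * ⟪x i, v⟫ = 11/10 * ⟪u, v⟫ := by
  have h := hx.isSimplexFinset.sum_inner_mul_inner (by simp) u v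
  rw [Finset.sum_image hx.injective.injOn] at h
  simpa only [real_inner_comm u] using h

theorem wAngle_eq (k : Fin 3) : wAngle k = (8 - 11 * ((k : ℕ) : ℝ)) / 30 := by
  fin_cases k <;> norm_num [wAngle, α1, α2, α3]

/-- Writing inner products with the simplex as `(8 - 11 k) / 30`, the angle between two vectors is
governed by the integral product of the labels `k`. -/
theorem IsRegularSimplex.sum_label_mul (hx : IsRegularSimplex x) {u v : EuclideanSpace ℝ (Fin 10)}
    {k l : Fin 11 → Fin 3} (hu : ∀ i, ⟪x i, u⟫ = wAngle (k i)) (hv : ∀ i, ⟪x i, v⟫ = wAngle (l i))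
    {j : Fin 3} (hj : ⟪u, v⟫ = wAngle j) :
    ∑ i, (k i : ℕ) * (l i : ℕ) + 3 * (j : ℕ) = 8 := by
  have h1 := hx.sum_eq_zero u
  have h2 := hx.sum_eq_zero v
  have h3 := hx.sum_mul u v
  simp only [hu, hv, hj, wAngle_eq] at h1 h2 h3
  rw [← Finset.sum_div, Finset.sum_sub_distrib, ← Finset.mul_sum] at h1 h2
  have h4 : ∑ i, (8 - 11 * ((k i : ℕ) : ℝ)) / 30 * ((8 - 11 * ((l i : ℕ) : ℝ)) / 30) =
      (704 - 88 * ∑ i, ((k i : ℕ) : ℝ) - 88 * ∑ i, ((l i : ℕ) : ℝ) +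
        121 * ∑ i, ((k i : ℕ) : ℝ) * ((l i : ℕ) : ℝ)) / 900 := by
    have : (704 : ℝ) = ∑ _i : Fin 11, 64 := by norm_num
    rw [this]
    simp only [Finset.mul_sum, ← Finset.sum_sub_distrib, ← Finset.sum_add_distrib, Finset.sum_div]
    exact Finset.sum_congr rfl fun i _ => by ring
  rw [h4] at h3
  norm_num at h1 h2
  have h5 : (∑ i, ((k i : ℕ) : ℝ) * ((l i : ℕ) : ℝ)) + 3 * ((j : ℕ) : ℝ) = 8 := by linarith
  exact_mod_cast h5

/-- The indices of the simplex vertices at angle `α2` to `u`. -/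
def rightIndices (x : Fin 11 → EuclideanSpace ℝ (Fin 10)) (u : EuclideanSpace ℝ (Fin 10)) :
    Finset (Fin 11) :=
  Finset.univ.filter fun i => ⟪x i, u⟫ = wAngle 1

theorem mem_rightIndices {u : EuclideanSpace ℝ (Fin 10)} {i : Fin 11} :
    i ∈ rightIndices x u ↔ ⟪x i, u⟫ = wAngle 1 := by
  simp [rightIndices]

theorem IsRegularSimplex.inner_eq_of_card_inter (hx : IsRegularSimplex x)
    {u v : EuclideanSpace ℝ (Fin 10)} (hu : ∀ i, ∃ k, ⟪x i, u⟫ = wAngle k)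
    (hv : ∀ i, ∃ k, ⟪x i, v⟫ = wAngle k) (huv : ∃ k, ⟪u, v⟫ = wAngle k)
    (h : (rightIndices x u ∩ rightIndices x v).card = 1) : ⟪u, v⟫ = wAngle 1 := by
  choose k hk using hu
  choose l hl using hv
  obtain ⟨j, hj⟩ := huv
  have hs := hx.sum_label_mul hk hl hj
  have hp : ∀ a b : Fin 3, (((a : ℕ) * (b : ℕ) : ℕ) : ZMod 2) = if a = 1 ∧ b = 1 then 1 else 0 := by
    decide
  have hi : (Finset.univ.filter fun i => k i = 1 ∧ l i = 1) =
      rightIndices x u ∩ rightIndices x v := by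
    ext i
    simp [mem_rightIndices, hk, hl, wAngle_injective.eq_iff]
  have hm : ((∑ i, (k i : ℕ) * (l i : ℕ) : ℕ) : ZMod 2) = (1 : ℕ) := by
    rw [Nat.cast_sum, Finset.sum_congr rfl fun i _ => hp (k i) (l i), Finset.sum_boole, hi, h]
  rw [ZMod.natCast_eq_natCast_iff] at hm
  unfold Nat.ModEq at hm
  rw [hj]
  congr 1
  apply Fin.ext
  have := j.2
  change (j : ℕ) = 1
  omega

theorem IsRegularSimplex.inner_eq_of_rightIndices_eq (hx : IsRegularSimplex x)
    {u v : EuclideanSpace ℝ (Fin 10)} (hu : ∀ i, ∃ k, ⟪x i, u⟫ = wAngle k)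
    (hv : ∀ i, ∃ k, ⟪x i, v⟫ = wAngle k) (huv : ∃ k, ⟪u, v⟫ = wAngle k)
    (h : rightIndices x u = rightIndices x v) (h2 : (rightIndices x u).card = 2) :
    ⟪u, v⟫ = wAngle 2 := by
  choose k hk using hu
  choose l hl using hv
  obtain ⟨j, hj⟩ := huv
  have hs := hx.sum_label_mul hk hl hj
  have hp : ∀ a b : Fin 3, (a = 1 ↔ b = 1) →
      (((a : ℕ) * (b : ℕ) : ℕ) : ZMod 4) = if a = 1 then 1 else 0 := by
    decide
  have hi (i : Fin 11) : k i = 1 ↔ l i = 1 := by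
    have := Finset.ext_iff.1 h i
    simpa [mem_rightIndices, hk, hl, wAngle_injective.eq_iff] using this
  have hc : (Finset.univ.filter fun i => k i = 1) = rightIndices x u := by
    ext i
    simp [mem_rightIndices, hk, wAngle_injective.eq_iff]
  have hm : ((∑ i, (k i : ℕ) * (l i : ℕ) : ℕ) : ZMod 4) = (2 : ℕ) := by
    rw [Nat.cast_sum, Finset.sum_congr rfl fun i _ => hp (k i) (l i) (hi i), Finset.sum_boole, hc,
      h2]
  rw [ZMod.natCast_eq_natCast_iff] at hm
  unfold Nat.ModEq at hm
  rw [hj]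
  congr 1
  apply Fin.ext
  have := j.2
  change (j : ℕ) = 2
  omega

/-- The regular simplex `x` together with the ones formed by a vertex `x i` and the vectors of `Y`
at angle `α2` to it. -/
def simplexFamily (x : Fin 11 → EuclideanSpace ℝ (Fin 10)) (Y : Finset (EuclideanSpace ℝ (Fin 10))) :
    Option (Fin 11) → Finset (EuclideanSpace ℝ (Fin 10))
  | none => Finset.univ.image x
  | some i => insert (x i) (Y.filter fun u => ⟪x i, u⟫ = wAngle 1)

theorem IsRegularSimplex.isSimplexCover (hx : IsRegularSimplex x)
    {Y : Finset (EuclideanSpace ℝ (Fin 10))} (hcard : Y.card = 55) (hnorm : ∀ u ∈ Y, ‖u‖ = 1)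
    (hY : ∀ u ∈ Y, ∀ i, ∃ k, ⟪x i, u⟫ = wAngle k)
    (htwo : ∀ u ∈ Y, (rightIndices x u).card = 2)
    (hin : ∀ u ∈ Y, ∀ v ∈ Y, u ≠ v → ∃ k, ⟪u, v⟫ = wAngle k) :
    IsSimplexCover (Finset.univ.image x ∪ Y) (simplexFamily x Y) := by
  have hxY (i : Fin 11) : x i ∉ Y := by
    intro h
    obtain ⟨k, hk⟩ := hY _ h i
    rw [inner_self_of_norm_one (hx.1 i)] at hk
    exact wAngle_ne_one k hk.symm
  have hmemx (i j : Fin 11) : x j ∈ simplexFamily x Y (some i) ↔ j = i := by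
    simp [simplexFamily, hxY, hx.injective.eq_iff]
  have hmemY (i : Fin 11) (u) (hu : u ∈ Y) :
      u ∈ simplexFamily x Y (some i) ↔ i ∈ rightIndices x u := by
    have : u ≠ x i := fun e => hxY i (e ▸ hu)
    simp [simplexFamily, mem_rightIndices, hu, this]
  have hnone_eq : simplexFamily x Y none = Finset.univ.image x := rfl
  have hcases (i : Fin 11) (u) (hu : u ∈ simplexFamily x Y (some i)) :
      u = x i ∨ u ∈ Y ∧ i ∈ rightIndices x u := by
    simpa [simplexFamily, mem_rightIndices] using hu
  have hsub (i : Fin 11) : IsSimplexFinset (simplexFamily x Y (some i)) := by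
    have hle (i : Fin 11) := card_le_of_inner_le (simplexFamily x Y (some i))
      (by
        intro u hu
        obtain rfl | hu := hcases i u hu
        · exact hx.1 i
        · exact hnorm u hu.1)
      (by
        intro u hu v hv huv
        obtain rfl | ⟨hu, hi⟩ := hcases i u hu <;> obtain rfl | ⟨hv, hi'⟩ := hcases i v hv
        · exact absurd rfl huv
        · exact (mem_rightIndices.1 hi').le
        · rw [real_inner_comm]
          exact (mem_rightIndices.1 hi).le
        · have hi2 : i ∈ rightIndices x u ∩ rightIndices x v := Finset.mem_inter.2 ⟨hi, hi'⟩
          by_cases he : rightIndices x u = rightIndices x v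
          · rw [hx.inner_eq_of_rightIndices_eq (hY u hu) (hY v hv) (hin u hu v hv huv) he
              (htwo u hu)]
            change α3 ≤ -1/10
            norm_num [α3]
          · refine (hx.inner_eq_of_card_inter (hY u hu) (hY v hv) (hin u hu v hv huv) ?_).le
            have h1 := Finset.card_pos.2 ⟨i, hi2⟩
            have h2 := htwo u hu
            have h3 := htwo v hv
            have h4 : (rightIndices x u ∩ rightIndices x v).card ≠ 2 := by
              intro h4
              have e1 := Finset.eq_of_subset_of_card_le
                (Finset.inter_subset_left (s₁ := rightIndices x u) (s₂ := rightIndices x v))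
                (by omega)
              have e2 := Finset.eq_of_subset_of_card_le
                (Finset.inter_subset_right (s₁ := rightIndices x u) (s₂ := rightIndices x v))
                (by omega)
              exact he (e1.symm.trans e2)
            have h5 := Finset.card_le_card
              (Finset.inter_subset_left (s₁ := rightIndices x u) (s₂ := rightIndices x v))
            omega)
    have hsum : ∑ i, (simplexFamily x Y (some i)).card = ∑ _i : Fin 11, 11 := by
      have h1 (i : Fin 11) : (simplexFamily x Y (some i)).card =
          1 + ∑ u ∈ Y, if i ∈ rightIndices x u then 1 else 0 := by
        rw [simplexFamily, Finset.card_insert_of_notMem (by simp [hxY]), add_comm]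
        simp [mem_rightIndices]
      simp_rw [h1]
      have h2 (u) (hu : u ∈ Y) : (∑ i, if i ∈ rightIndices x u then 1 else 0) = 2 := by
        rw [← htwo u hu]
        simp
      rw [Finset.sum_add_distrib, Finset.sum_comm, Finset.sum_congr (s₁ := Y) rfl h2]
      simp [hcard]
    exact (hle i).2
      ((Finset.sum_eq_sum_iff_of_le fun i _ => (hle i).1).1 hsum i (Finset.mem_univ i))
  refine ⟨by simp, ?_, ?_, ?_, ?_, ?_, ?_⟩
  · intro u hu
    obtain hu | hu := Finset.mem_union.1 hu
    · exact hx.isSimplexFinset.norm_eq u hu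
    · exact hnorm u hu
  · intro u hu v hv huv
    obtain hu | hu := Finset.mem_union.1 hu <;> obtain hv | hv := Finset.mem_union.1 hv
    · exact ⟨1, hx.isSimplexFinset.inner_eq u hu v hv huv⟩
    · obtain ⟨i, -, rfl⟩ := Finset.mem_image.1 hu
      exact hY v hv i
    · obtain ⟨i, -, rfl⟩ := Finset.mem_image.1 hv
      rw [real_inner_comm]
      exact hY u hu i
    · exact hin u hu v hv huv
  · rintro (_ | i)
    · exact hx.isSimplexFinset
    · exact hsub i
  · rintro (_ | i) u hu
    · exact Finset.mem_union_left _ hu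
    · obtain rfl | hu := hcases i u hu
      · exact Finset.mem_union_left _ (Finset.mem_image_of_mem x (Finset.mem_univ i))
      · exact Finset.mem_union_right _ hu.1
  · intro u hu
    obtain hu | hu := Finset.mem_union.1 hu
    · obtain ⟨j, -, rfl⟩ := Finset.mem_image.1 hu
      refine (congrArg Finset.card (?_ : _ = ({none, some j} : Finset (Option (Fin 11))))).trans
        (Finset.card_pair (by simp))
      ext (_ | i)
      · simp [hnone_eq]
      · simp [hmemx, eq_comm]
    · refine (congrArg Finset.card
        (?_ : _ = (rightIndices x u).map Function.Embedding.some)).trans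
        (by rw [Finset.card_map, htwo u hu])
      ext (_ | i)
      · have : ∀ i, x i ≠ u := fun i e => hxY i (e ▸ hu)
        simp [hnone_eq, this]
      · simp [hmemY i u hu]
  · have hnone (i : Fin 11) (u) (h1 : u ∈ simplexFamily x Y none)
        (h2 : u ∈ simplexFamily x Y (some i)) : u = x i := by
      obtain ⟨j, -, rfl⟩ := Finset.mem_image.1 h1
      rw [(hmemx i j).1 h2]
    have hsome (i j : Fin 11) (u) (hij : i ≠ j) (h1 : u ∈ simplexFamily x Y (some i))
        (h2 : u ∈ simplexFamily x Y (some j)) : u ∈ Y ∧ rightIndices x u = {i, j} := by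
      obtain rfl | ⟨hu, hi⟩ := hcases i u h1
      · exact absurd ((hmemx j i).1 h2) hij
      · refine ⟨hu, (Finset.eq_of_subset_of_card_le ?_ ?_).symm⟩
        · simp [Finset.insert_subset_iff, hi, (hmemY j u hu).1 h2]
        · rw [htwo u hu, Finset.card_pair hij]
    rintro (_ | i) (_ | j) u v hab hua hub hva hvb
    · exact absurd rfl hab
    · rw [hnone j u hua hub, hnone j v hva hvb]
    · rw [hnone i u hub hua, hnone i v hvb hva]
    · have hij : i ≠ j := fun e => hab (congrArg some e)
      obtain ⟨hu, hu2⟩ := hsome i j u hij hua hub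
      obtain ⟨hv, hv2⟩ := hsome i j v hij hva hvb
      by_contra huv
      have h1 := hx.inner_eq_of_rightIndices_eq (hY u hu) (hY v hv) (hin u hu v hv huv)
        (hu2.trans hv2.symm) (htwo u hu)
      have h2 : ⟪u, v⟫ = wAngle 1 := (hsub i).inner_eq u hua v hva huv
      exact absurd (wAngle_injective (h1.symm.trans h2)) (by decide)

theorem IsSimplexCover.isWConfig {ι : Type*} [Fintype ι] {X : Finset (EuclideanSpace ℝ (Fin 10))}
    {S : ι → Finset (EuclideanSpace ℝ (Fin 10))} (h : IsSimplexCover X S) :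
    IsWConfig (X : Set (EuclideanSpace ℝ (Fin 10))) := by
  have hE : Module.finrank ℝ (EuclideanSpace ℝ (Fin 10)) = 10 := by simp
  have hval (u) (hu : u ∈ X) (i : Fin 3) :
      {v | v ∈ (X : Set (EuclideanSpace ℝ (Fin 10))) ∧ ⟪u, v⟫ = wAngle i}.ncard =
        (![30, 20, 15] i : ℕ) := by
    have h1 := h.card_filter hE hu i
    have h2 : (![30, 20, 15] i : ℝ) = ((![30, 20, 15] i : ℕ) : ℝ) := by fin_cases i <;> simp
    rw [h2, Nat.cast_inj] at h1
    rw [← h1, ← Set.ncard_coe_finset]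
    simp
  refine ⟨by rw [Set.ncard_coe_finset, h.card_eq], h.norm_eq, fun u hu v hv huv =>
    exists_eq_wAngle_iff.1 (h.angle u hu v hv huv), fun u hu => ⟨hval u hu 0, hval u hu 1,
    hval u hu 2⟩, fun u hu v hv huv k i j hk => ?_⟩
  rw [← h.card_filter_and hE hu hv huv hk i j, ← Set.ncard_coe_finset]
  simp

theorem label_of_ncard {u : EuclideanSpace ℝ (Fin 10)}
    (h1 : {i : Fin 11 | ⟪x i, u⟫ = α1}.ncard = 6) (h2 : {i : Fin 11 | ⟪x i, u⟫ = α2}.ncard = 2)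
    (h3 : {i : Fin 11 | ⟪x i, u⟫ = α3}.ncard = 3) :
    (∀ i, ∃ k, ⟪x i, u⟫ = wAngle k) ∧ (rightIndices x u).card = 2 := by
  have hf (k : Fin 3) : (Finset.univ.filter fun i => ⟪x i, u⟫ = wAngle k).card =
      {i : Fin 11 | ⟪x i, u⟫ = wAngle k}.ncard := by
    rw [← Set.ncard_coe_finset]
    simp
  have e0 := (hf 0).trans h1
  have e1 := (hf 1).trans h2
  have e2 := (hf 2).trans h3
  refine ⟨fun i => ?_, e1⟩
  have hU : (Finset.univ.biUnion fun k => Finset.univ.filter fun i => ⟪x i, u⟫ = wAngle k) =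
      Finset.univ := by
    rw [← Finset.card_eq_iff_eq_univ, Finset.card_biUnion, Fin.sum_univ_three]
    · rw [e0, e1, e2]
      simp
    · intro k _ l _ hkl
      rw [Function.onFun, Finset.disjoint_filter]
      exact fun i _ hk hl => hkl (wAngle_injective (hk.symm.trans hl))
  have hi := hU ▸ Finset.mem_univ i
  simpa using hi

theorem ncard_of_mem_Y1set {y : EuclideanSpace ℝ (Fin 10)} (hy : y ∈ Y1set x) :
    {i : Fin 11 | ⟪x i, y⟫ = α1}.ncard = 6 ∧ {i : Fin 11 | ⟪x i, y⟫ = α2}.ncard = 2 ∧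
      {i : Fin 11 | ⟪x i, y⟫ = α3}.ncard = 3 := by
  obtain ⟨-, h0, h1, h2, h3⟩ := hy
  have hne (t : ℝ) (ht : t ≠ α2) :
      {i : Fin 11 | ⟪x i, y⟫ = t} = {i : Fin 11 | i ≠ 0 ∧ ⟪x i, y⟫ = t} := by
    ext i
    refine ⟨fun h => ⟨?_, h⟩, fun h => h.2⟩
    rintro rfl
    exact ht (h.symm.trans h0)
  have he : {i : Fin 11 | ⟪x i, y⟫ = α2} = insert 0 {i : Fin 11 | i ≠ 0 ∧ ⟪x i, y⟫ = α2} := by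
    ext i
    by_cases hi : i = 0
    · simp [hi, h0]
    · simp [hi]
  rw [hne α1 (by norm_num [α1, α2]), hne α3 (by norm_num [α3, α2]), he,
    Set.ncard_insert_of_notMem (by simp), h1, h2, h3]
  simp

end Label

end Simplex

/-- If `C2` is a clique of order 10 in the graph on `Y1` and `Z1` is a
45-element subset of `Z` with all pairwise inner products of distinct elements
in `{α1, α2, α3}`, then `C1 ∪ C2 ∪ Z1` is a `W`-configuration. -/
theorem isWConfig_of_simplex_clique_Z1 (x : Fin 11 → EuclideanSpace ℝ (Fin 10))
    (hx : IsRegularSimplex x)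
    (C2 : Set (EuclideanSpace ℝ (Fin 10))) (hC2 : IsClique10 x C2)
    (Z1 : Set (EuclideanSpace ℝ (Fin 10))) (hZ1 : Z1 ⊆ Zset x C2)
    (hcard : Z1.ncard = 45)
    (hin : ∀ u ∈ Z1, ∀ v ∈ Z1, u ≠ v → ⟪u, v⟫ ∈ ({α1, α2, α3} : Set ℝ)) :
    IsWConfig (Set.range x ∪ C2 ∪ Z1) := by
  classical
  obtain ⟨hC2Y, hC2card, hC2in⟩ := hC2
  obtain ⟨C, rfl⟩ := (Set.finite_of_ncard_ne_zero (s := C2) (by omega)).exists_finset_coe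
  obtain ⟨Z, rfl⟩ := (Set.finite_of_ncard_ne_zero (s := Z1) (by omega)).exists_finset_coe
  rw [Set.ncard_coe_finset] at hC2card hcard
  have hdisj : Disjoint C Z :=
    Finset.disjoint_left.2 fun u hu hz => (hZ1 hz).1.2.1 hu
  have hlabel (u) (hu : u ∈ C ∪ Z) :
      (∀ i, ∃ k, ⟪x i, u⟫ = wAngle k) ∧ (rightIndices x u).card = 2 := by
    obtain hu | hu := Finset.mem_union.1 hu
    · obtain ⟨h1, h2, h3⟩ := ncard_of_mem_Y1set (hC2Y hu)
      exact label_of_ncard h1 h2 h3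
    · obtain ⟨-, -, h1, h2, h3⟩ := (hZ1 hu).1
      exact label_of_ncard h1 h2 h3
  have hcover := hx.isSimplexCover (Y := C ∪ Z)
    (by rw [Finset.card_union_of_disjoint hdisj, hC2card, hcard])
    (fun u hu => (Finset.mem_union.1 hu).elim (fun h => (hC2Y h).1) fun h => (hZ1 h).1.1)
    (fun u hu => (hlabel u hu).1) (fun u hu => (hlabel u hu).2) (by
      intro u hu v hv huv
      obtain hu | hu := Finset.mem_union.1 hu <;> obtain hv | hv := Finset.mem_union.1 hv
      · exact ⟨1, hC2in u hu v hv huv⟩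
      · rw [real_inner_comm]
        exact exists_eq_wAngle_iff.2 ((hZ1 hv).2 u hu)
      · exact exists_eq_wAngle_iff.2 ((hZ1 hu).2 v hv)
      · exact exists_eq_wAngle_iff.2 (hin u hu v hv huv))
  convert hcover.isWConfig using 1
  simp [Set.union_assoc]
end
end

section
/- There exists a W-configuration in ℝ^10, i.e., a set of 66 unit vectors in EuclideanSpace ℝ (Fin 10) whose pairwise inner products lie in {4/15, -1/10, -7/15} and which realizes the intersection numbers of the association scheme W of the Witt 4-(11,5,1) design. -/
open RealInnerProductSpace

noncomputable section

/-- Vectors of Gram matrix `(v * |B p ∩ B q| - k ^ 2) / (k * (v - k))` attached to a family of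
`k`-subsets of a set of `v = n + 1` points: the normalized projections of the characteristic
vectors to the orthogonal complement of the all-one vector. -/
theorem exists_inner_eq_of_card_inter {ι : Type*} {n k : ℕ} (hk : 0 < k) (hkn : k < n + 1)
    (B : ι → Finset (Fin (n + 1))) (hB : ∀ p, (B p).card = k) :
    ∃ x : ι → EuclideanSpace ℝ (Fin n), ∀ p q, ⟪x p, x q⟫ =
      ((n + 1) * ((B p ∩ B q).card : ℝ) - k ^ 2) / (k * (n + 1 - k)) := by
  have hk' : (0 : ℝ) < k := by exact_mod_cast hk
  have hkn' : (0 : ℝ) < n + 1 - k := by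
    rw [sub_pos]; exact_mod_cast hkn
  let one : EuclideanSpace ℝ (Fin (n + 1)) := WithLp.toLp 2 fun _ => 1
  have hone : one ≠ 0 := fun h => by
    simpa [one] using congrArg (fun y : EuclideanSpace ℝ (Fin (n + 1)) => y 0) h
  have : Fact (Module.finrank ℝ (EuclideanSpace ℝ (Fin (n + 1))) = n + 1) := ⟨by simp⟩
  let c : ℝ := √((n + 1) / (k * (n + 1 - k)))
  have hc : c * c = (n + 1) / (k * (n + 1 - k)) := Real.mul_self_sqrt (by positivity)
  let y : ι → EuclideanSpace ℝ (Fin (n + 1)) := fun p =>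
    WithLp.toLp 2 fun a => c * ((if a ∈ B p then 1 else 0) - k / (n + 1))
  have hy : ∀ p, y p ∈ (Submodule.span ℝ {one})ᗮ := fun p => by
    rw [Submodule.mem_orthogonal_singleton_iff_inner_right]
    simp only [one, y, PiLp.inner_apply, RCLike.inner_apply, map_one, mul_one,
      ← Finset.mul_sum, Finset.sum_sub_distrib, Finset.sum_boole, Finset.sum_const,
      Finset.card_univ, Fintype.card_fin, Finset.filter_univ_mem, hB, nsmul_eq_mul]
    push_cast
    field_simp
    simp
  refine ⟨fun p => (OrthonormalBasis.fromOrthogonalSpanSingleton n hone).repr ⟨y p, hy p⟩,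
    fun p q => ?_⟩
  have hterm : ∀ a : Fin (n + 1), y p a * y q a = c * c * ((if a ∈ B p ∩ B q then 1 else 0)
      - k / (n + 1) * (if a ∈ B p then 1 else 0) - k / (n + 1) * (if a ∈ B q then 1 else 0)
      + (k / (n + 1)) ^ 2) := fun a => by
    by_cases hp : a ∈ B p <;> by_cases hq : a ∈ B q <;> simp [y, hp, hq] <;> ring
  rw [LinearIsometryEquiv.inner_map_map, Submodule.coe_inner, PiLp.inner_apply]
  simp only [RCLike.inner_apply, conj_trivial, mul_comm (y q _), hterm]
  simp only [← Finset.mul_sum, Finset.sum_add_distrib, Finset.sum_sub_distrib, Finset.sum_boole,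
    Finset.sum_const, Finset.card_univ, Fintype.card_fin, Finset.filter_univ_mem, hB,
    nsmul_eq_mul, hc]
  push_cast
  field_simp
  ring

/-- The fibre sizes of `c` are the digits of `∑ w ∈ s, b ^ c w` in any base `b > |s|`. -/
theorem card_filter_eq_digit {ι : Type*} (s : Finset ι) (c : ι → ℕ) {b : ℕ} (hb : s.card < b)
    (k : ℕ) : (s.filter fun w => c w = k).card = (∑ w ∈ s, b ^ c w) / b ^ k % b := by
  have hb0 : 0 < b := by omega
  have hlt : ∑ w ∈ s with c w < k, b ^ c w < b ^ k := by
    cases k with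
    | zero => simp
    | succ k =>
      calc ∑ w ∈ s with c w < k + 1, b ^ c w
          ≤ (s.filter fun w => c w < k + 1).card • b ^ k :=
            Finset.sum_le_card_nsmul _ _ _ fun w hw =>
              Nat.pow_le_pow_right hb0 (Nat.lt_succ_iff.mp (Finset.mem_filter.mp hw).2)
        _ < b ^ (k + 1) := by
            rw [smul_eq_mul, pow_succ']
            exact Nat.mul_lt_mul_of_pos_right
              ((Finset.card_filter_le _ _).trans_lt hb) (pow_pos hb0 k)
  obtain ⟨m, hm⟩ : b ^ (k + 1) ∣ ∑ w ∈ s with k < c w, b ^ c w :=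
    Finset.dvd_sum fun w hw => pow_dvd_pow b (Finset.mem_filter.mp hw).2
  have heq : ∑ w ∈ s with c w = k, b ^ c w = (s.filter fun w => c w = k).card * b ^ k := by
    rw [Finset.sum_congr rfl fun w hw => by rw [(Finset.mem_filter.mp hw).2], Finset.sum_const,
      smul_eq_mul]
  have hsplit : ∑ w ∈ s, b ^ c w = (∑ w ∈ s with c w < k, b ^ c w)
      + b ^ k * ((s.filter fun w => c w = k).card + b * m) := by
    have h : ∑ w ∈ s, b ^ c w = (∑ w ∈ s with c w < k, b ^ c w)
        + ((∑ w ∈ s with c w = k, b ^ c w) + ∑ w ∈ s with k < c w, b ^ c w) := by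
      simp only [Finset.sum_filter, ← Finset.sum_add_distrib]
      refine Finset.sum_congr rfl fun w _ => ?_
      rcases lt_trichotomy (c w) k with h | h | h
      · simp [h, h.ne, h.le]
      · simp [h]
      · simp [h, h.ne', h.le]
    rw [h, heq, hm]
    ring
  rw [hsplit, Nat.add_mul_div_left _ _ (pow_pos hb0 k), Nat.div_eq_of_lt hlt, zero_add,
    Nat.add_mul_mod_self_left, Nat.mod_eq_of_lt ((Finset.card_filter_le _ _).trans_lt hb)]

/-- Base blocks of the Witt design 4-(11,5,1) under the translations of `ℤ/11`. -/
def wittBase : Fin 6 → Finset (Fin 11) :=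
  ![{1, 3, 4, 5, 9}, {0, 1, 2, 3, 5}, {0, 3, 4, 6, 9}, {0, 1, 5, 7, 9}, {0, 3, 4, 5, 10},
    {0, 1, 4, 8, 9}]

/-- The 66 blocks of the Witt design: the translates of the base blocks. -/
def wittBlock (p : Fin 6 × Fin 11) : Finset (Fin 11) :=
  Finset.univ.filter fun x => x - p.2 ∈ wittBase p.1

/-- The decimal digit of weight `10 ^ d` of the entry `(s, t)` is the number of points shared by
the base block `s` and the translate by `d` of the base block `t`. -/
def wittTable : List (List ℕ) :=
  [[22222222225, 23121133333, 23213313133, 13231333213, 33112331233, 11322333133],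
    [33331121323, 33211112335, 32331312322, 12132332323, 23322112333, 21221333332],
    [31313312323, 23213133232, 12313313215, 32313232312, 32123232133, 22223313313],
    [12333132313, 23233231213, 13232313232, 13132231315, 12333221332, 22331223133],
    [32133211333, 33211223323, 31232321233, 33122333212, 31123321135, 31133223322],
    [31333223113, 33333122122, 13313322223, 31322133223, 23322331132, 21331133125]]

/-- The intersection sizes listed in `wittTable`. -/
def wittCorr (s t d : ℕ) : ℕ := (wittTable.getD s []).getD t 0 / 10 ^ d % 10

theorem card_wittBase_inter_translate : ∀ (s t : Fin 6) (d : Fin 11),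
    (Finset.univ.filter fun x => x ∈ wittBase s ∧ x - d ∈ wittBase t).card = wittCorr s t d := by
  decide +kernel

theorem card_wittBlock_inter (p q : Fin 6 × Fin 11) :
    (wittBlock p ∩ wittBlock q).card = wittCorr p.1 q.1 (q.2 - p.2 : Fin 11) := by
  rw [← card_wittBase_inter_translate]
  refine Finset.card_equiv (Equiv.subRight p.2) fun x => ?_
  simp [wittBlock]

theorem wittCorr_mem : ∀ (s t : Fin 6) (d : Fin 11),
    wittCorr s t d = 1 ∨ wittCorr s t d = 2 ∨ wittCorr s t d = 3 ∨
      wittCorr s t d = 5 ∧ s = t ∧ d = 0 := by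
  decide +kernel

theorem wittCorr_self : ∀ s : Fin 6, wittCorr s s 0 = 5 := by
  decide +kernel

/-- The number whose base 100 digit at `a + 6 * b` counts the blocks meeting two given blocks,
which share `m` points, in `a` and `b` points respectively. -/
def wittDigits (m : ℕ) : ℕ :=
  if m = 5 then 100 ^ 35 + 30 * 100 ^ 21 + 20 * 100 ^ 14 + 15 * 100 ^ 7
  else 100 ^ (5 + 6 * m) + 100 ^ (m + 30) +
    ∑ i : Fin 3, ∑ j : Fin 3, wP (Fin.ofNat 3 (3 - m)) i j * 100 ^ (3 - i.val + 6 * (3 - j.val))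

theorem sum_pow_wittCorr : ∀ s ∈ Finset.range 6, ∀ t ∈ Finset.range 6, ∀ d ∈ Finset.range 11,
    ∑ r ∈ Finset.range 6, ∑ e ∈ Finset.range 11,
      100 ^ (wittCorr s r e + 6 * wittCorr r t ((11 - e + d) % 11)) =
    wittDigits (wittCorr s t d) := by
  decide +kernel

theorem sum_pow_card_wittBlock_inter (p q : Fin 6 × Fin 11) :
    ∑ w, 100 ^ ((wittBlock p ∩ wittBlock w).card + 6 * (wittBlock w ∩ wittBlock q).card) =
      wittDigits (wittBlock p ∩ wittBlock q).card := by
  simp only [card_wittBlock_inter]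
  rw [← sum_pow_wittCorr p.1 (by simp) q.1 (by simp) _ (by simp), Finset.sum_range,
    Fintype.sum_prod_type]
  refine Finset.sum_congr rfl fun r _ => ?_
  rw [Finset.sum_range, ← Equiv.sum_comp (Equiv.addRight p.2)]
  refine Finset.sum_congr rfl fun e _ => ?_
  have h : q.2 - (e + p.2) = q.2 - p.2 - e := by abel
  simp only [Equiv.coe_addRight, add_sub_cancel_right, h, Fin.sub_def (q.2 - p.2) e]

theorem card_wittBlock (p : Fin 6 × Fin 11) : (wittBlock p).card = 5 := by
  simpa [wittCorr_self] using card_wittBlock_inter p p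

theorem card_wittBlock_inter_mem (p q : Fin 6 × Fin 11) (h : p ≠ q) :
    (wittBlock p ∩ wittBlock q).card = 1 ∨ (wittBlock p ∩ wittBlock q).card = 2 ∨
      (wittBlock p ∩ wittBlock q).card = 3 := by
  have := wittCorr_mem p.1 q.1 (q.2 - p.2)
  rw [← card_wittBlock_inter] at this
  rcases this with h1 | h1 | h1 | ⟨-, h1, h2⟩
  · exact .inl h1
  · exact .inr (.inl h1)
  · exact .inr (.inr h1)
  · exact absurd (Prod.ext h1 (sub_eq_zero.mp h2).symm) h

theorem card_filter_wittBlock_inter (p q : Fin 6 × Fin 11) {a b : ℕ} (ha : a ≤ 5) :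
    (Finset.univ.filter fun w =>
      (wittBlock p ∩ wittBlock w).card = a ∧ (wittBlock w ∩ wittBlock q).card = b).card =
      wittDigits (wittBlock p ∩ wittBlock q).card / 100 ^ (a + 6 * b) % 100 := by
  rw [← sum_pow_card_wittBlock_inter, ← card_filter_eq_digit _ _ (by simp)]
  congr 1
  refine Finset.filter_congr fun w _ => ?_
  have : (wittBlock p ∩ wittBlock w).card ≤ 5 :=
    (Finset.card_le_card Finset.inter_subset_left).trans_eq (card_wittBlock p)
  omega

theorem card_filter_wittBlock_inter_eq (p : Fin 6 × Fin 11) (i : Fin 3) :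
    (Finset.univ.filter fun w => (wittBlock p ∩ wittBlock w).card = 3 - i.val).card =
      ![30, 20, 15] i := by
  have h := card_filter_wittBlock_inter p p (a := 3 - i.val) (b := 3 - i.val) (by omega)
  simp only [Finset.inter_comm _ (wittBlock p), and_self, Finset.inter_self,
    card_wittBlock] at h
  rw [h]
  clear h
  revert i
  decide +kernel

theorem wittDigits_eq_wP : ∀ k i j : Fin 3,
    wittDigits (3 - k.val) / 100 ^ (3 - i.val + 6 * (3 - j.val)) % 100 = wP k i j := by
  decide +kernel

/-- The angle of index `k` corresponds to blocks sharing `3 - k` points. -/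
theorem eq_wAngle_iff (m : ℕ) (k : Fin 3) :
    ((11 : ℝ) * m - 25) / 30 = wAngle k ↔ m = 3 - k.val := by
  have h (a : ℕ) : ((11 : ℝ) * m - 25) / 30 = (11 * a - 25) / 30 ↔ m = a := by
    rw [div_left_inj' (by norm_num), sub_left_inj, mul_right_inj' (by norm_num), Nat.cast_inj]
  rw [← h]
  fin_cases k <;> norm_num [wAngle, α1, α2, α3]

/-- There exists a `W`-configuration in ℝ^10. -/
theorem wConfig_exists :
    ∃ X : Set (EuclideanSpace ℝ (Fin 10)), IsWConfig X := by
  obtain ⟨x, hx⟩ := exists_inner_eq_of_card_inter (n := 10) (by norm_num) (by norm_num)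
    wittBlock card_wittBlock
  replace hx : ∀ p q, ⟪x p, x q⟫ = ((11 : ℝ) * (wittBlock p ∩ wittBlock q).card - 25) / 30 :=
    fun p q => by rw [hx]; norm_num
  have hangle (p q) (k : Fin 3) :
      ⟪x p, x q⟫ = wAngle k ↔ (wittBlock p ∩ wittBlock q).card = 3 - k.val := by
    rw [hx, eq_wAngle_iff]
  have hself (p) : ⟪x p, x p⟫ = 1 := by
    rw [hx, Finset.inter_self, card_wittBlock]; norm_num
  have hmem (p q) (hpq : p ≠ q) : ∃ k : Fin 3, ⟪x p, x q⟫ = wAngle k := by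
    simp only [hangle]
    rcases card_wittBlock_inter_mem p q hpq with h | h | h
    · exact ⟨2, h⟩
    · exact ⟨1, h⟩
    · exact ⟨0, h⟩
  have hinj : Function.Injective x := fun p q h => by
    by_contra hpq
    obtain ⟨k, hk⟩ := hmem p q hpq
    rw [← h, hself] at hk
    fin_cases k <;> norm_num [wAngle, α1, α2, α3] at hk
  have hcard (P : EuclideanSpace ℝ (Fin 10) → Prop) [DecidablePred fun w => P (x w)] :
      {v | v ∈ Set.range x ∧ P v}.ncard = (Finset.univ.filter fun w => P (x w)).card := by
    have : {v | v ∈ Set.range x ∧ P v} = x '' {w | P (x w)} := by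
      ext v
      constructor
      · rintro ⟨⟨w, rfl⟩, hw⟩
        exact ⟨w, hw, rfl⟩
      · rintro ⟨w, hw, rfl⟩
        exact ⟨⟨w, rfl⟩, hw⟩
    rw [this, Set.ncard_image_of_injective _ hinj, ← Set.ncard_coe_finset]
    simp
  have hval (p) (i : Fin 3) :
      {v | v ∈ Set.range x ∧ ⟪x p, v⟫ = wAngle i}.ncard = ![30, 20, 15] i := by
    classical
    rw [hcard, ← card_filter_wittBlock_inter_eq p i]
    simp only [hangle]
  refine ⟨Set.range x, ?_, ?_, ?_, ?_, ?_⟩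
  · rw [← Set.image_univ, Set.ncard_image_of_injective _ hinj, Set.ncard_univ]
    simp
  · rintro _ ⟨p, rfl⟩
    rw [norm_eq_sqrt_real_inner, hself, Real.sqrt_one]
  · rintro _ ⟨p, rfl⟩ _ ⟨q, rfl⟩ hpq
    obtain ⟨k, hk⟩ := hmem p q (ne_of_apply_ne x hpq)
    rw [hk]
    fin_cases k <;> simp [wAngle]
  · rintro _ ⟨p, rfl⟩
    exact ⟨hval p 0, hval p 1, hval p 2⟩
  · rintro _ ⟨p, rfl⟩ _ ⟨q, rfl⟩ - k i j hk
    classical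
    rw [hcard fun v => ⟪x p, v⟫ = wAngle i ∧ ⟪v, x q⟫ = wAngle j]
    simp only [hangle] at hk ⊢
    rw [card_filter_wittBlock_inter p q (by omega), hk, wittDigits_eq_wP]
end
end
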